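/- The characteristic polynomial of the moment matrix M₀ of the uniform design measure equals (X − 1)·(X − (b₀ + (m−2)b₁))^{m−1}·(X − (b₀ − 2b₁))^{(m−1)(m−2)/2}; equivalently, M₀ has eigenvalues 1, b₀ + (m−2)b₁ and b₀ − 2b₁ with multiplicities 1, m−1 and (m−1)(m−2)/2 respectively. (Theorem 2, second part.) -/

import Mathlib

open Matrix Finset

namespace OofA

/-- The index set `S` of pairs `(i,j)` with `i < j`. -/
abbrev Pairs (m : ℕ) := {ij : Fin m × Fin m // ij.1 < ij.2}

/-- `z_{ij}(a)`: for a treatment `a` (a permutation, `a k` being the component placed at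
position `k`), this equals `c h` where `h` is the distance between the positions of the
components `i` and `j` in `a`, with sign `+` if `i` precedes `j` and `-` otherwise. -/
noncomputable def z {m : ℕ} (c : ℕ → ℝ) (a : Equiv.Perm (Fin m)) (ij : Pairs m) : ℝ :=
  if (a.symm ij.1.1 : ℕ) < (a.symm ij.1.2 : ℕ) then
    c (Nat.dist (a.symm ij.1.1 : ℕ) (a.symm ij.1.2 : ℕ))
  else
    -c (Nat.dist (a.symm ij.1.1 : ℕ) (a.symm ij.1.2 : ℕ))

/-- The vector `x(a) = (1, z(a)ᵀ)ᵀ ∈ ℝ^p`, indexed by `Unit ⊕ Pairs m`. -/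
noncomputable def x {m : ℕ} (c : ℕ → ℝ) (a : Equiv.Perm (Fin m)) : (Unit ⊕ Pairs m) → ℝ :=
  Sum.elim (fun _ => (1 : ℝ)) (z c a)

/-- The moment matrix `M(w) = Σ_a w(a) x(a) x(a)ᵀ` of a design measure `w`. -/
noncomputable def momentMatrix {m : ℕ} (c : ℕ → ℝ) (w : Equiv.Perm (Fin m) → ℝ) :
    Matrix (Unit ⊕ Pairs m) (Unit ⊕ Pairs m) ℝ :=
  ∑ a : Equiv.Perm (Fin m), w a • Matrix.vecMulVec (x c a) (x c a)

/-- The moment matrix `M₀` of the uniform design measure `w₀(a) = 1/m!`. -/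
noncomputable def M0 (m : ℕ) (c : ℕ → ℝ) : Matrix (Unit ⊕ Pairs m) (Unit ⊕ Pairs m) ℝ :=
  momentMatrix c (fun _ => 1 / (Nat.factorial m : ℝ))

/-- A signed permutation matrix: exactly one nonzero entry in each row and in each column,
each nonzero entry being `1` or `-1`. -/
def IsSignedPerm {n : Type*} [Fintype n] (R : Matrix n n ℝ) : Prop :=
  (∀ i, ∃! j, R i j ≠ 0) ∧ (∀ j, ∃! i, R i j ≠ 0) ∧
    (∀ i j, R i j ≠ 0 → R i j = 1 ∨ R i j = -1)

/-- `b₀ = (2/(m(m−1))) Σ_{h=1}^{m−1} (m−h) c_h²`. -/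
noncomputable def b0 (m : ℕ) (c : ℕ → ℝ) : ℝ :=
  (2 / ((m : ℝ) * ((m : ℝ) - 1))) *
    ∑ h ∈ Finset.Icc 1 (m - 1), ((m : ℝ) - (h : ℝ)) * (c h) ^ 2

/-- `b₁ = (2/(m(m−1)(m−2))) Σ (m−h₁−h₂) c_{h₁} (2c_{h₁+h₂} − c_{h₂})`,
summed over `h₁, h₂ ≥ 1` with `h₁ + h₂ ≤ m − 1`. -/
noncomputable def b1 (m : ℕ) (c : ℕ → ℝ) : ℝ :=
  (2 / ((m : ℝ) * ((m : ℝ) - 1) * ((m : ℝ) - 2))) *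
    ∑ h1 ∈ Finset.Icc 1 (m - 1), ∑ h2 ∈ Finset.Icc 1 (m - 1 - h1),
      ((m : ℝ) - (h1 : ℝ) - (h2 : ℝ)) * c h1 * (2 * c (h1 + h2) - c h2)

/-- The `q × q` matrix `V` of (7). -/
noncomputable def V (m : ℕ) : Matrix (Pairs m) (Pairs m) ℝ := fun ij kl =>
  if (ij.1.1 = kl.1.1 ∧ ij.1.2 ≠ kl.1.2) ∨ (ij.1.1 ≠ kl.1.1 ∧ ij.1.2 = kl.1.2) then 1
  else if ij.1.1 = kl.1.2 ∨ ij.1.2 = kl.1.1 then -1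
  else 0

/-!
The entry `z_{ij}(a)` is an antisymmetric function of the positions of `i` and `j` in `a`. Under a
uniformly random treatment its mean, and its product moments over disjoint pairs, therefore vanish:
interchanging `i` and `j` flips the sign. The remaining product moments are averages over all
injective pairs or triples of positions. Such a tuple is an increasing tuple followed by a
reordering, and `m - h`, resp. `m - h₁ - h₂`, increasing tuples have gaps `h`, resp. `(h₁, h₂)`;
this yields `b₀` for a repeated pair and `± b₁` for two pairs sharing one component. Hence
`M₀ = 1 ⊕ (b₀ I + b₁ V)`. Finally `V + 2 I = B Bᵀ` for the oriented incidence matrix `B` of the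
complete graph, and `Bᵀ B = m I - J`, so the spectrum of `V` follows from that of `m I - J` because
`B Bᵀ` and `Bᵀ B` have the same nonzero eigenvalues.
-/

section Averages

open scoped BigOperators

theorem expect_smul_eq_expect {G X K : Type*} [Group G] [Fintype G] [MulAction G X]
    [MulAction.IsPretransitive G X] [Fintype X] [Semifield K] [CharZero K] (F : X → K) (y : X) :
    𝔼 g : G, F (g • y) = 𝔼 y', F y' := by
  have orbit_average_const (y' : X) : 𝔼 g : G, F (g • y') = 𝔼 g : G, F (g • y) := by
    obtain ⟨g, rfl⟩ := MulAction.exists_smul_eq G y y'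
    exact Fintype.expect_equiv (Equiv.mulRight g) _ _ fun h => by simp [mul_smul]
  have : Nonempty X := ⟨y⟩
  calc 𝔼 g : G, F (g • y) = 𝔼 y', 𝔼 g : G, F (g • y') := by
        simp only [orbit_average_const, Fintype.expect_const]
    _ = 𝔼 g : G, 𝔼 y', F (g • y') := expect_comm ..
    _ = 𝔼 g : G, 𝔼 y', F y' :=
        expect_congr rfl fun g _ => Fintype.expect_equiv (MulAction.toPerm g) _ _ fun _ => rfl
    _ = 𝔼 y', F y' := Fintype.expect_const _

theorem expect_perm_comp_eq_expect_embedding {α K : Type*} [Fintype α] [DecidableEq α] [Semifield K]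
    [CharZero K] {n : ℕ} (F : (Fin n → α) → K) {v : Fin n → α} (hv : Function.Injective v) :
    𝔼 σ : Equiv.Perm α, F (σ ∘ v) = 𝔼 e : Fin n ↪ α, F e := by
  have := Equiv.Perm.isMultiplyPretransitive α n
  exact expect_smul_eq_expect (G := Equiv.Perm α) (fun e : Fin n ↪ α => F e) ⟨v, hv⟩

theorem expect_eq_zero_of_mul_right_eq_neg {G K : Type*} [Group G] [Fintype G] [Field K]
    [CharZero K] {F : G → K} (g : G) (hF : ∀ h, F (h * g) = -F h) : 𝔼 h, F h = 0 := by
  have : 𝔼 h, F h = -𝔼 h, F h := by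
    rw [← expect_neg_distrib]
    exact (Fintype.expect_equiv (Equiv.mulRight g) _ _ fun h => (hF h).symm).symm
  exact self_eq_neg.mp this

theorem sum_embedding_eq_sum_orderEmbedding_sum_perm {α M : Type*} [Fintype α] [LinearOrder α]
    [AddCommMonoid M] {n : ℕ} (F : (Fin n → α) → M) :
    ∑ e : Fin n ↪ α, F e = ∑ s : Fin n ↪o α, ∑ τ : Equiv.Perm (Fin n), F (s ∘ τ) := by
  let permute (p : (Fin n ↪o α) × Equiv.Perm (Fin n)) : Fin n ↪ α :=
    p.2.toEmbedding.trans p.1.toEmbedding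
  have permute_bijective : Function.Bijective permute := by
    constructor
    · rintro ⟨s, τ⟩ ⟨s', τ'⟩ h
      have h : s ∘ τ = s' ∘ τ' := congrArg DFunLike.coe h
      obtain rfl : s = s' := by
        rw [← OrderEmbedding.range_inj, ← τ.surjective.range_comp s, h, τ'.surjective.range_comp]
      obtain rfl : τ = τ' := Equiv.ext fun i => s.injective (congrFun h i)
      rfl
    · intro e
      have sorted : StrictMono (e ∘ Tuple.sort e) :=
        (Tuple.monotone_sort e).strictMono_of_injective
          (e.injective.comp (Tuple.sort e).injective)
      exact ⟨(OrderEmbedding.ofStrictMono _ sorted, (Tuple.sort e)⁻¹), by ext; simp [permute]⟩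
  rw [← Fintype.sum_prod_type']
  exact (Fintype.sum_bijective permute permute_bijective _ _ fun _ => rfl).symm

theorem sum_orderEmbedding_fin_two {R : Type*} [Ring R] (m : ℕ) (G : ℕ → R) :
    ∑ s : Fin 2 ↪o Fin m, G (s 1 - s 0) = ∑ h ∈ Icc 1 (m - 1), ((m : R) - h) * G h := by
  have card_translates : ∀ h ∈ Icc 1 (m - 1),
      ((m : R) - h) * G h = ∑ _p ∈ range (m - h), G h := by
    intro h hh
    rw [mem_Icc] at hh
    rw [sum_const, card_range, nsmul_eq_mul, Nat.cast_sub (by lia)]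
  rw [sum_congr rfl card_translates, sum_sigma']
  refine sum_bij (fun s _ => ⟨s 1 - s 0, s 0⟩) ?_ ?_ ?_ fun _ _ => rfl
  · intro s _
    have : s 0 < s 1 := s.strictMono (by decide)
    simp only [mem_sigma, mem_Icc, mem_range]
    lia
  · intro s _ t _ h
    have : s 0 < s 1 := s.strictMono (by decide)
    have : t 0 < t 1 := t.strictMono (by decide)
    simp only [Sigma.mk.injEq, heq_eq_eq] at h
    exact DFunLike.ext _ _ (Fin.forall_fin_two.mpr ⟨by lia, by lia⟩)
  · rintro ⟨h, p⟩ hp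
    simp only [mem_sigma, mem_Icc, mem_range] at hp
    let v : Fin 2 → Fin m := ![⟨p, by lia⟩, ⟨p + h, by lia⟩]
    have hv : StrictMono v := by
      simp only [v, Fin.strictMono_iff_lt_succ, Fin.forall_fin_one, Fin.castSucc_zero,
        Fin.isValue, cons_val_zero, cons_val_succ, cons_val_fin_one, Fin.mk_lt_mk]
      lia
    exact ⟨OrderEmbedding.ofStrictMono v hv, mem_univ _, by simp [v]⟩

theorem sum_orderEmbedding_fin_three {R : Type*} [Ring R] (m : ℕ) (G : ℕ → ℕ → R) :
    ∑ s : Fin 3 ↪o Fin m, G (s 1 - s 0) (s 2 - s 1) =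
      ∑ h₁ ∈ Icc 1 (m - 1), ∑ h₂ ∈ Icc 1 (m - 1 - h₁), ((m : R) - h₁ - h₂) * G h₁ h₂ := by
  have card_translates : ∀ h₁ ∈ Icc 1 (m - 1), ∀ h₂ ∈ Icc 1 (m - 1 - h₁),
      ((m : R) - h₁ - h₂) * G h₁ h₂ = ∑ _p ∈ range (m - h₁ - h₂), G h₁ h₂ := by
    intro h₁ hh₁ h₂ hh₂
    rw [mem_Icc] at hh₁ hh₂
    rw [sum_const, card_range, nsmul_eq_mul, Nat.cast_sub (by lia), Nat.cast_sub (by lia)]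
  rw [sum_congr rfl fun h₁ hh₁ => sum_congr rfl (card_translates h₁ hh₁)]
  simp only [sum_sigma']
  refine sum_bij (fun s _ => ⟨s 1 - s 0, s 2 - s 1, s 0⟩) ?_ ?_ ?_ fun _ _ => rfl
  · intro s _
    have : s 0 < s 1 := s.strictMono (by decide)
    have : s 1 < s 2 := s.strictMono (by decide)
    simp only [mem_sigma, mem_Icc, mem_range]
    lia
  · intro s _ t _ h
    have : s 0 < s 1 := s.strictMono (by decide)
    have : t 0 < t 1 := t.strictMono (by decide)
    have : s 1 < s 2 := s.strictMono (by decide)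
    have : t 1 < t 2 := t.strictMono (by decide)
    simp only [Sigma.mk.injEq, heq_eq_eq] at h
    ext i
    fin_cases i <;> simp only [Fin.zero_eta, Fin.mk_one, Fin.reduceFinMk] <;> lia
  · rintro ⟨h₁, h₂, p⟩ hp
    simp only [mem_sigma, mem_Icc, mem_range] at hp
    let v : Fin 3 → Fin m := ![⟨p, by lia⟩, ⟨p + h₁, by lia⟩, ⟨p + h₁ + h₂, by lia⟩]
    have hv : StrictMono v := by
      simp only [v, Fin.strictMono_iff_lt_succ, Fin.forall_fin_two, Fin.castSucc_zero,
        Fin.castSucc_one, Fin.isValue, cons_val_zero, cons_val_one, cons_val_succ,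
        cons_val_fin_one, Fin.mk_lt_mk]
      lia
    exact ⟨OrderEmbedding.ofStrictMono v hv, mem_univ _, by simp [v]⟩

theorem sum_gaps_comm {M : Type*} [AddCommMonoid M] (m : ℕ) (F : ℕ → ℕ → M) :
    ∑ h₁ ∈ Icc 1 (m - 1), ∑ h₂ ∈ Icc 1 (m - 1 - h₁), F h₁ h₂ =
      ∑ h₁ ∈ Icc 1 (m - 1), ∑ h₂ ∈ Icc 1 (m - 1 - h₁), F h₂ h₁ :=
  sum_comm' fun h₁ h₂ => by
    simp only [mem_Icc]
    lia

theorem sum_perm_fin_two {M : Type*} [AddCommMonoid M] (F : (Fin 2 → Fin 2) → M) :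
    ∑ τ : Equiv.Perm (Fin 2), F τ = F ![0, 1] + F ![1, 0] := by
  rw [show (univ : Finset (Equiv.Perm (Fin 2))) = {1, Equiv.swap 0 1} by decide,
    sum_pair (by decide)]
  congr <;> decide

theorem sum_perm_fin_three {M : Type*} [AddCommMonoid M] (F : (Fin 3 → Fin 3) → M) :
    ∑ τ : Equiv.Perm (Fin 3), F τ =
      F ![0, 1, 2] + (F ![0, 2, 1] + (F ![1, 0, 2] +
        (F ![2, 0, 1] + (F ![1, 2, 0] + F ![2, 1, 0])))) := by
  have univ_eq : (univ : Finset (Equiv.Perm (Fin 3))) =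
      {1, Equiv.swap 1 2, Equiv.swap 0 1, (finRotate 3)⁻¹, finRotate 3, Equiv.swap 0 2} := by decide
  rw [univ_eq, sum_insert (by decide), sum_insert (by decide), sum_insert (by decide),
    sum_insert (by decide), sum_pair (by decide)]
  congr <;> decide

end Averages

section TaperedSign

open scoped BigOperators

/-- The value contributed by a pair of components placed at positions `u` and `v`: `c |u - v|`,
signed by the order of the two positions. Taking it to be `0` on the diagonal makes it
antisymmetric for every `c`. -/
def taperedSign (c : ℕ → ℝ) {m : ℕ} (u v : Fin m) : ℝ :=
  if u < v then c (v - u) else if v < u then -c (u - v) else 0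

theorem taperedSign_of_lt (c : ℕ → ℝ) {m : ℕ} {u v : Fin m} (h : u < v) :
    taperedSign c u v = c (v - u) :=
  if_pos h

theorem taperedSign_swap (c : ℕ → ℝ) {m : ℕ} (u v : Fin m) :
    taperedSign c u v = -taperedSign c v u := by
  rcases lt_trichotomy u v with h | rfl | h
  · simp [taperedSign, h, h.not_gt]
  · simp [taperedSign]
  · simp [taperedSign, h, h.not_gt]

theorem taperedSign_of_gt (c : ℕ → ℝ) {m : ℕ} {u v : Fin m} (h : v < u) :
    taperedSign c u v = -c (u - v) := by
  rw [taperedSign_swap, taperedSign_of_lt c h]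

theorem z_eq_taperedSign (c : ℕ → ℝ) {m : ℕ} (a : Equiv.Perm (Fin m)) (ij : Pairs m) :
    z c a ij = taperedSign c (a.symm ij.1.1) (a.symm ij.1.2) := by
  rcases lt_or_gt_of_ne (a.symm.injective.ne ij.2.ne) with h | h
  · rw [taperedSign_of_lt c h, z, if_pos (Fin.lt_def.mp h), Nat.dist_eq_sub_of_le h.le]
  · rw [taperedSign_of_gt c h, z, if_neg (Fin.lt_def.mp h).not_gt,
      Nat.dist_eq_sub_of_le_right h.le]

theorem expect_embedding_taperedSign_sq (m : ℕ) (c : ℕ → ℝ) :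
    𝔼 e : Fin 2 ↪ Fin m, taperedSign c (e 0) (e 1) ^ 2 = b0 m c := by
  have sum_orderings (s : Fin 2 ↪o Fin m) :
      ∑ τ : Equiv.Perm (Fin 2), taperedSign c (s (τ 0)) (s (τ 1)) ^ 2 =
        2 * c (s 1 - s 0) ^ 2 := by
    have h : s 0 < s 1 := s.strictMono (by decide)
    rw [sum_perm_fin_two fun τ => taperedSign c (s (τ 0)) (s (τ 1)) ^ 2]
    simp [taperedSign_of_lt c h, taperedSign_of_gt c h, two_mul]
  rw [Fintype.expect_eq_sum_div_card, Fintype.card_embedding_eq, Fintype.card_fin, Fintype.card_fin,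
    Nat.cast_descFactorial_two,
    sum_embedding_eq_sum_orderEmbedding_sum_perm fun v => taperedSign c (v 0) (v 1) ^ 2]
  simp only [Function.comp_apply, sum_orderings, ← mul_sum,
    sum_orderEmbedding_fin_two m fun h => c h ^ 2, b0]
  ring

theorem sum_perm_taperedSign_mul_taperedSign (c : ℕ → ℝ) {m : ℕ} (s : Fin 3 ↪o Fin m) :
    ∑ τ : Equiv.Perm (Fin 3),
        taperedSign c (s (τ 0)) (s (τ 1)) * taperedSign c (s (τ 0)) (s (τ 2)) =
      2 * (c (s 1 - s 0) * (c ((s 1 - s 0) + (s 2 - s 1)) - c (s 2 - s 1)) +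
        c (s 2 - s 1) * c ((s 2 - s 1) + (s 1 - s 0))) := by
  have h₀₁ : s 0 < s 1 := s.strictMono (by decide)
  have h₁₂ : s 1 < s 2 := s.strictMono (by decide)
  have h₀₂ : s 0 < s 2 := h₀₁.trans h₁₂
  rw [sum_perm_fin_three fun τ =>
      taperedSign c (s (τ 0)) (s (τ 1)) * taperedSign c (s (τ 0)) (s (τ 2)),
    add_comm (s 2 - s 1 : ℕ), show (s 1 - s 0 + (s 2 - s 1) : ℕ) = s 2 - s 0 by lia]
  simp only [Fin.isValue, cons_val_zero, cons_val_one, Matrix.cons_val, taperedSign_of_lt c h₀₁,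
    taperedSign_of_gt c h₀₁, taperedSign_of_lt c h₁₂, taperedSign_of_gt c h₁₂,
    taperedSign_of_lt c h₀₂, taperedSign_of_gt c h₀₂]
  ring

theorem expect_embedding_taperedSign_mul_taperedSign (m : ℕ) (c : ℕ → ℝ) :
    𝔼 e : Fin 3 ↪ Fin m, taperedSign c (e 0) (e 1) * taperedSign c (e 0) (e 2) = b1 m c := by
  have card_eq : (Fintype.card (Fin 3 ↪ Fin m) : ℝ) = m * (m - 1) * (m - 2) := by
    rw [Fintype.card_embedding_eq, Fintype.card_fin, Fintype.card_fin,
      ← descPochhammer_eval_eq_descFactorial]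
    simp [descPochhammer_succ_right]
  rw [Fintype.expect_eq_sum_div_card, card_eq,
    sum_embedding_eq_sum_orderEmbedding_sum_perm
      fun v => taperedSign c (v 0) (v 1) * taperedSign c (v 0) (v 2)]
  simp only [Function.comp_apply, sum_perm_taperedSign_mul_taperedSign, ← mul_sum]
  rw [sum_add_distrib, sum_orderEmbedding_fin_three m fun h₁ h₂ => c h₁ * (c (h₁ + h₂) - c h₂),
    sum_orderEmbedding_fin_three m fun h₁ h₂ => c h₂ * c (h₂ + h₁),
    sum_gaps_comm m fun h₁ h₂ => ((m : ℝ) - h₁ - h₂) * (c h₂ * c (h₂ + h₁)), b1]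
  simp only [← sum_add_distrib]
  rw [mul_div_right_comm]
  congr 1
  exact sum_congr rfl fun h₁ _ => sum_congr rfl fun h₂ _ => by ring

end TaperedSign

section PairMoment

open scoped BigOperators

variable {α : Type*} [Fintype α] [DecidableEq α]

/-- The mixed second moment of the values of `f` at the pairs `(i, j)` and `(k, l)` after a
uniformly random relabelling of `α`. -/
noncomputable def pairMoment (f : α → α → ℝ) (i j k l : α) : ℝ :=
  𝔼 σ : Equiv.Perm α, f (σ i) (σ j) * f (σ k) (σ l)

theorem pairMoment_self (f : α → α → ℝ) {i j : α} (hij : i ≠ j) :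
    pairMoment f i j i j = 𝔼 e : Fin 2 ↪ α, f (e 0) (e 1) ^ 2 := by
  have hv : Function.Injective ![i, j] := by
    simp [Function.Injective, Fin.forall_fin_two, hij, hij.symm]
  rw [← expect_perm_comp_eq_expect_embedding (fun v => f (v 0) (v 1) ^ 2) hv]
  simp [pairMoment, sq]

theorem pairMoment_common_left (f : α → α → ℝ) {i j k : α} (hij : i ≠ j) (hik : i ≠ k)
    (hjk : j ≠ k) :
    pairMoment f i j i k = 𝔼 e : Fin 3 ↪ α, f (e 0) (e 1) * f (e 0) (e 2) := by
  have hv : Function.Injective ![i, j, k] := by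
    simp [Function.Injective, Fin.forall_fin_succ, hij, hij.symm, hik, hik.symm, hjk, hjk.symm]
  rw [← expect_perm_comp_eq_expect_embedding (fun v => f (v 0) (v 1) * f (v 0) (v 2)) hv]
  simp [pairMoment]

variable {f : α → α → ℝ} (hf : ∀ u v, f u v = -f v u)
include hf

theorem expect_perm_of_antisymm (i j : α) : 𝔼 σ : Equiv.Perm α, f (σ i) (σ j) = 0 :=
  expect_eq_zero_of_mul_right_eq_neg (Equiv.swap i j) fun σ => by
    simpa using hf (σ j) (σ i)

theorem pairMoment_swap_left (i j k l : α) : pairMoment f i j k l = -pairMoment f j i k l := by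
  rw [pairMoment, pairMoment, ← expect_neg_distrib]
  exact expect_congr rfl fun σ _ => by rw [hf, neg_mul]

theorem pairMoment_swap_right (i j k l : α) : pairMoment f i j k l = -pairMoment f i j l k := by
  rw [pairMoment, pairMoment, ← expect_neg_distrib]
  exact expect_congr rfl fun σ _ => by rw [hf (σ k), mul_neg]

theorem pairMoment_of_disjoint {i j k l : α} (hki : k ≠ i) (hkj : k ≠ j) (hli : l ≠ i)
    (hlj : l ≠ j) : pairMoment f i j k l = 0 :=
  expect_eq_zero_of_mul_right_eq_neg (Equiv.swap i j) fun σ => by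
    simp [Equiv.swap_apply_of_ne_of_ne hki hkj, Equiv.swap_apply_of_ne_of_ne hli hlj, hf (σ j)]

end PairMoment

section Moment

open scoped BigOperators

theorem pairMoment_taperedSign (c : ℕ → ℝ) {m : ℕ} (ij kl : Pairs m) :
    pairMoment (taperedSign c) ij.1.1 ij.1.2 kl.1.1 kl.1.2 =
      (b0 m c • (1 : Matrix (Pairs m) (Pairs m) ℝ) + b1 m c • V m) ij kl := by
  obtain ⟨⟨i, j⟩, hij : i < j⟩ := ij
  obtain ⟨⟨k, l⟩, hkl : k < l⟩ := kl
  have hf := taperedSign_swap c (m := m)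
  have self {i j : Fin m} (h : i ≠ j) :
      pairMoment (taperedSign c) i j i j = b0 m c := by
    rw [pairMoment_self _ h, expect_embedding_taperedSign_sq]
  have common {i j k : Fin m} (hij : i ≠ j) (hik : i ≠ k) (hjk : j ≠ k) :
      pairMoment (taperedSign c) i j i k = b1 m c := by
    rw [pairMoment_common_left _ hij hik hjk, expect_embedding_taperedSign_mul_taperedSign]
  simp only [Matrix.add_apply, Matrix.smul_apply, Matrix.one_apply, V, Subtype.mk.injEq,
    Prod.mk.injEq, smul_eq_mul]
  by_cases hik : i = k
  · subst k
    by_cases hjl : j = l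
    · subst l
      simp [self hij.ne, hij.ne, hij.ne']
    · simp [common hij.ne hkl.ne hjl, hjl]
  · by_cases hjl : j = l
    · subst l
      rw [pairMoment_swap_left hf, pairMoment_swap_right hf, neg_neg,
        common hij.ne' hkl.ne' hik]
      simp [hik]
    · by_cases hil : i = l
      · subst l
        rw [pairMoment_swap_right hf, common hij.ne hkl.ne' (hkl.trans hij).ne']
        simp [hik, hjl]
      · by_cases hjk : j = k
        · subst k
          rw [pairMoment_swap_left hf, common hij.ne' hkl.ne hil]
          simp [hik, hjl]
        · rw [pairMoment_of_disjoint hf (Ne.symm hik) (Ne.symm hjk) (Ne.symm hil) (Ne.symm hjl)]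
          simp [hik, hjl, hil, hjk]

theorem M0_apply (m : ℕ) (c : ℕ → ℝ) (p q : Unit ⊕ Pairs m) :
    M0 m c p q = 𝔼 a, x c a p * x c a q := by
  rw [Fintype.expect_eq_sum_div_card, Fintype.card_perm, Fintype.card_fin, sum_div]
  simp only [M0, momentMatrix, Matrix.sum_apply, Matrix.smul_apply, vecMulVec_apply, smul_eq_mul,
    one_div_mul_eq_div]

theorem expect_perm_symm {α : Type*} [Fintype α] [DecidableEq α] (F : Equiv.Perm α → ℝ) :
    𝔼 a : Equiv.Perm α, F a.symm = 𝔼 σ, F σ :=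
  Fintype.expect_equiv (Equiv.inv _) _ _ fun _ => rfl

theorem M0_eq_fromBlocks (m : ℕ) (c : ℕ → ℝ) :
    M0 m c = fromBlocks 1 0 0 (b0 m c • 1 + b1 m c • V m) := by
  have expect_z (ij : Pairs m) : 𝔼 a, z c a ij = 0 := by
    simp only [z_eq_taperedSign]
    rw [expect_perm_symm fun σ => taperedSign c (σ ij.1.1) (σ ij.1.2),
      expect_perm_of_antisymm (taperedSign_swap c)]
  ext (_ | ij) (_ | kl)
  · simp [M0_apply, x]
  · simp [M0_apply, x, expect_z]
  · simp [M0_apply, x, expect_z]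
  · rw [fromBlocks_apply₂₂, ← pairMoment_taperedSign, M0_apply]
    simp only [x, Sum.elim_inr, z_eq_taperedSign]
    exact expect_perm_symm fun σ =>
      taperedSign c (σ ij.1.1) (σ ij.1.2) * taperedSign c (σ kl.1.1) (σ kl.1.2)

end Moment

section Spectrum

open Polynomial

theorem sum_pairs {M : Type*} [AddCommMonoid M] {m : ℕ} (g : Fin m → Fin m → M) :
    ∑ ij : Pairs m, g ij.1.1 ij.1.2 = ∑ i, ∑ j, if i < j then g i j else 0 := by
  rw [← Fintype.sum_prod_type' fun i j => if i < j then g i j else 0, ← sum_filter]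
  exact (sum_subtype _ (by simp) fun p : Fin m × Fin m => g p.1 p.2).symm

theorem sum_sum_eq_sum_diag_add_sum_pairs {M : Type*} [AddCommMonoid M] {m : ℕ}
    (g : Fin m → Fin m → M) :
    ∑ i, ∑ j, g i j = ∑ i, g i i + ∑ ij : Pairs m, (g ij.1.1 ij.1.2 + g ij.1.2 ij.1.1) := by
  have trichotomy (i j : Fin m) : g i j =
      (if i = j then g i j else 0) +
        ((if i < j then g i j else 0) + if j < i then g i j else 0) := by
    rcases lt_trichotomy i j with h | rfl | h
    · simp [h, h.ne, h.not_gt]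
    · simp
    · simp [h, h.ne', h.not_gt]
  rw [sum_add_distrib, sum_pairs, sum_pairs fun i j => g j i,
    sum_comm (f := fun i j => if i < j then g j i else 0)]
  simp only [← sum_add_distrib]
  refine sum_congr rfl fun i _ => ?_
  rw [sum_congr rfl fun j _ => trichotomy i j, sum_add_distrib, sum_ite_eq, if_pos (mem_univ i)]

theorem card_pairs (m : ℕ) : Fintype.card (Pairs m) = m.choose 2 := by
  have h := sum_sum_eq_sum_diag_add_sum_pairs (m := m) fun _ _ => 1
  simp only [sum_const, card_univ, Fintype.card_fin, smul_eq_mul, mul_one] at h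
  rw [Nat.choose_two_right, Nat.mul_sub_one]
  lia

/-- The oriented incidence matrix `B` of the complete graph on `Fin m`: the row of `(i, j)` is
`eᵢ - eⱼ`. It factors `V + 2 = B Bᵀ`, while `Bᵀ B` is the Laplacian of the complete graph. -/
def incidence (m : ℕ) : Matrix (Pairs m) (Fin m) ℝ :=
  Matrix.of fun ij => Pi.single ij.1.1 1 - Pi.single ij.1.2 1

theorem V_eq_incidence_mul_transpose_sub (m : ℕ) :
    V m = incidence m * (incidence m)ᵀ - (2 : ℝ) • 1 := by
  ext ⟨⟨i, j⟩, hij : i < j⟩ ⟨⟨k, l⟩, hkl : k < l⟩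
  have inner_rows : (incidence m * (incidence m)ᵀ) ⟨(i, j), hij⟩ ⟨(k, l), hkl⟩ =
      (if k = i then 1 else 0) - (if k = j then 1 else 0) -
        ((if l = i then 1 else 0) - (if l = j then 1 else 0)) := by
    simp [incidence, Matrix.mul_apply, mul_sub, Pi.single_apply]
  simp only [Matrix.sub_apply, inner_rows, V, Matrix.smul_apply, Matrix.one_apply, Subtype.mk.injEq,
    Prod.mk.injEq]
  split_ifs <;> first | lia | norm_num

theorem incidence_transpose_mul (m : ℕ) :
    (incidence m)ᵀ * incidence m = (m : ℝ) • 1 - vecMulVec 1 1 := by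
  ext k l
  let edge (i j : Fin m) : Fin m → ℝ := Pi.single i 1 - Pi.single j 1
  have sum_all : ∑ i, ∑ j, edge i j k * edge i j l =
      2 * (m * (1 : Matrix (Fin m) (Fin m) ℝ) k l - 1) := by
    by_cases hkl : k = l <;>
      simp [edge, Pi.single_apply, mul_sub, sum_sub_distrib, hkl, Matrix.one_apply] <;> ring
  have sum_all_eq_two_mul : ∑ i, ∑ j, edge i j k * edge i j l =
      2 * ((incidence m)ᵀ * incidence m) k l := by
    rw [sum_sum_eq_sum_diag_add_sum_pairs fun i j => edge i j k * edge i j l, Matrix.mul_apply,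
      mul_sum]
    have diag (i : Fin m) : edge i i k * edge i i l = 0 := by simp [edge]
    simp only [diag, sum_const_zero, zero_add]
    refine sum_congr rfl fun ij _ => ?_
    simp only [edge, incidence, Matrix.transpose_apply, Matrix.of_apply, Pi.sub_apply]
    ring
  have entry := mul_left_cancel₀ two_ne_zero (sum_all_eq_two_mul.symm.trans sum_all)
  simpa [vecMulVec_apply] using entry

theorem charpoly_smul_one_add {n R : Type*} [Fintype n] [DecidableEq n] [CommRing R] (a : R)
    (M : Matrix n n R) : (a • 1 + M).charpoly = M.charpoly.comp (X - C a) := by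
  have h := charpoly_sub_scalar M (-a)
  rwa [map_neg, sub_neg_eq_add, scalar_apply, ← smul_one_eq_diagonal, add_comm, C_neg,
    ← sub_eq_add_neg] at h

theorem charpoly_smul_one_add_vecMulVec {n R : Type*} [Fintype n] [DecidableEq n] [Nonempty n]
    [CommRing R] (a : R) (u v : n → R) :
    (a • 1 + vecMulVec u v).charpoly =
      (X - C a) ^ (Fintype.card n - 1) * (X - C (a + u ⬝ᵥ v)) := by
  obtain ⟨k, hk⟩ := Nat.exists_eq_add_of_le' (Fintype.card_pos (α := n))
  rw [charpoly_smul_one_add, charpoly_vecMulVec, hk, Nat.add_sub_cancel]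
  simp only [smul_eq_C_mul, pow_succ, sub_comp, mul_comp, pow_comp, X_comp, C_comp, C_add]
  ring

theorem charpoly_smul_incidence_mul_transpose {m : ℕ} (hm : m ≠ 0) (b : ℝ) :
    (b • (incidence m * (incidence m)ᵀ)).charpoly =
      X ^ ((m - 1) * (m - 2) / 2) * (X - C (m * b)) ^ (m - 1) := by
  have gram : (incidence m)ᵀ * (b • incidence m) = (m * b) • 1 + vecMulVec (fun _ => -b) 1 := by
    rw [Matrix.mul_smul, incidence_transpose_mul, smul_sub, smul_smul, mul_comm, sub_eq_add_neg,
      ← smul_vecMulVec, ← neg_vecMulVec]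
    congr
    ext
    exact mul_one b
  have kernel_eigenvalue : m * b + (fun _ : Fin m => -b) ⬝ᵥ 1 = 0 := by
    simp [dotProduct]
  have card_eq : m.choose 2 + 1 = m + (m - 1) * (m - 2) / 2 := by
    obtain ⟨n, rfl⟩ := Nat.exists_eq_succ_of_ne_zero hm
    rw [Nat.succ_sub_one, show n.succ - 2 = n - 1 by lia, ← Nat.choose_two_right,
      Nat.choose_succ_succ' n 1, Nat.choose_one_right]
    lia
  have : Nonempty (Fin m) := ⟨0, Nat.pos_of_ne_zero hm⟩
  have sylvester := charpoly_mul_comm' (b • incidence m) (incidence m)ᵀ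
  rw [gram, charpoly_smul_one_add_vecMulVec, kernel_eigenvalue, C_0, sub_zero, Matrix.smul_mul,
    Fintype.card_fin, card_pairs, mul_left_comm, ← pow_succ, card_eq, mul_comm,
    pow_add] at sylvester
  rw [← (isRegular_X_pow m).left.eq_iff, mul_comm, sylvester]
  ring

theorem charpoly_smul_one_add_smul_V {m : ℕ} (hm : m ≠ 0) (a b : ℝ) :
    (a • 1 + b • V m).charpoly =
      (X - C (a + (m - 2) * b)) ^ (m - 1) * (X - C (a - 2 * b)) ^ ((m - 1) * (m - 2) / 2) := by
  have : a • 1 + b • V m = (a - 2 * b) • 1 + b • (incidence m * (incidence m)ᵀ) := by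
    rw [V_eq_incidence_mul_transpose_sub, smul_sub, smul_smul, sub_smul, mul_comm]
    abel
  rw [this, charpoly_smul_one_add, charpoly_smul_incidence_mul_transpose hm, mul_comm]
  have shift : X - C (a - 2 * b) - C (m * b) = X - C (a + (m - 2) * b) := by
    rw [sub_sub, ← C_add]
    ring_nf
  rw [mul_comp, pow_comp, pow_comp, sub_comp, X_comp, C_comp, shift]

end Spectrum

open Polynomial in
-- For `m ≤ 2` the divisions by zero in `b₀` and `b₁` do no harm: the affected terms only occur with
-- the coefficient `m - 2 = 0` or inside a power with exponent `0`.
theorem statement2_general {m : ℕ} (hm : m ≠ 0) (c : ℕ → ℝ) :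
    (M0 m c).charpoly =
      (X - C 1) * (X - C (b0 m c + ((m : ℝ) - 2) * b1 m c)) ^ (m - 1) *
        (X - C (b0 m c - 2 * b1 m c)) ^ ((m - 1) * (m - 2) / 2) := by
  rw [M0_eq_fromBlocks, charpoly_fromBlocks_zero₁₂, charpoly_one, Fintype.card_unit, pow_one,
    charpoly_smul_one_add_smul_V hm, mul_assoc, C_1]

open Polynomial in
/-- Theorem 2, second part: the characteristic polynomial of `M₀` is
`(X − 1)(X − (b₀ + (m−2)b₁))^{m−1}(X − (b₀ − 2b₁))^{(m−1)(m−2)/2}`. -/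
theorem statement2 {m : ℕ} (hm : 3 ≤ m) (c : ℕ → ℝ) (hc1 : c 1 = 1)
    (hmono : ∀ h : ℕ, 1 ≤ h → h + 1 ≤ m - 1 → c (h + 1) ≤ c h)
    (hlast : 0 ≤ c (m - 1)) :
    (M0 m c).charpoly =
      (X - C 1) * (X - C (b0 m c + ((m : ℝ) - 2) * b1 m c)) ^ (m - 1) *
        (X - C (b0 m c - 2 * b1 m c)) ^ ((m - 1) * (m - 2) / 2) :=
  statement2_general (by lia) c

end OofA
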